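/- (Theorem 1.) Let γ > 0, γ_α > 0, η > 0, let Σ : ℝ^d → Mat_{d×d}(ℝ) be a field of symmetric matrices (the minibatch gradient-noise covariance) and σ² : ℝ^d → ℝ (the minibatch potential-noise variance), both continuous. Then p = exp(−H_e) is annihilated by the Fokker–Planck operator of the stochastic-approximation dynamics in which the gradient noise η Σ(θ)/2 and potential noise adds diffusion that is exactly compensated by reducing the injected noise: for every (θ,r,α,r_α), −∑_i r_i ∂_{θ_i} p + ∑_i ∂_{r_i}[(∂_{θ_i}U(θ) + γ r_i) p] + (η/2) ∑_{i,j} ∂_{r_i}[Σ_{ij}(θ) ∂_{r_j} p] − r_α ∂_α p + ∂_{r_α}[(γ_α r_α − h(θ,r,α)) p] + (η/2) g′(α) σ²(θ) ∂²_{r_α} p + ∑_i ∂_{r_i}[ (γ/g(α)) ∂_{r_i} p ] − (η/2) ∑_{i,j} ∂_{r_i}[Σ_{ij}(θ) ∂_{r_j} p] + γ_α ∂²_{r_α} p − (η/2) g′(α) σ²(θ) ∂²_{r_α} p = 0. Hence exp(−H_e) is the stationary (unnormalized) density of the stochastic-approximation continuously tempered Langevin dynamics when the noise-variance terms Σ(θ)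 and σ²(θ) are available. -/

import Mathlib

open scoped BigOperators

/-- Partial derivative of `f : (Fin d → ℝ) → ℝ` at `x` in the `i`-th coordinate. -/
noncomputable def pd {d : ℕ} (f : (Fin d → ℝ) → ℝ) (x : Fin d → ℝ) (i : Fin d) : ℝ :=
  deriv (fun s => f (Function.update x i s)) (x i)

/-- The Hamiltonian `H(θ,r) = U(θ) + ‖r‖²/2`. -/
noncomputable def Hfun {d : ℕ} (U : (Fin d → ℝ) → ℝ) (θ r : Fin d → ℝ) : ℝ :=
  U θ + (∑ i, (r i) ^ 2) / 2

/-- The extended Hamiltonian `H_e(θ,r,α,r_α) = g(α)H(θ,r) + φ(α) + r_α²/2`. -/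
noncomputable def Hext {d : ℕ} (U : (Fin d → ℝ) → ℝ) (g φ : ℝ → ℝ)
    (θ r : Fin d → ℝ) (a ra : ℝ) : ℝ :=
  g a * Hfun U θ r + φ a + ra ^ 2 / 2

/-- The coupling function `h(θ,r,α) = −g′(α)H(θ,r) − φ′(α)`. -/
noncomputable def hcpl {d : ℕ} (U : (Fin d → ℝ) → ℝ) (g φ : ℝ → ℝ)
    (θ r : Fin d → ℝ) (a : ℝ) : ℝ :=
  -(deriv g a) * Hfun U θ r - deriv φ a

/-- The unnormalized stationary density `p = exp(−H_e)`. -/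
noncomputable def pdens {d : ℕ} (U : (Fin d → ℝ) → ℝ) (g φ : ℝ → ℝ)
    (θ r : Fin d → ℝ) (a ra : ℝ) : ℝ :=
  Real.exp (-(Hext U g φ θ r a ra))

/-!
The two minibatch-noise diffusions cancel against the reduction of the injected noise, so only the
noise-free continuously tempered Langevin dynamics matters. There, in each momentum direction, the
friction flux and the diffusion flux of `p` sum to zero: `(γ / g α) ∂_{r_i} p = -(γ r_i p)` and
`γ_α ∂_{r_α} p = -(γ_α r_α p)`. What is left is Hamiltonian transport, which
annihilates `exp (-H_e)` separately on each conjugate pair `(θ_i, r_i)` and `(α, r_α)`.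
-/

theorem deriv_drift_add_deriv_diffusion_of_flux_balance {𝕜 : Type*} [NontriviallyNormedField 𝕜]
    {q b D : 𝕜 → 𝕜} {x : 𝕜} (c : 𝕜) (hq : DifferentiableAt 𝕜 q x) (hb : DifferentiableAt 𝕜 b x)
    (flux_balance : ∀ s, D s * deriv q s = -(b s * q s)) :
    deriv (fun s => (c + b s) * q s) x + deriv (fun s => D s * deriv q s) x = c * deriv q x := by
  have hdrift := ((hb.hasDerivAt.const_add c).fun_mul hq.hasDerivAt).deriv
  have hdiffusion := (hb.hasDerivAt.fun_mul hq.hasDerivAt).fun_neg.deriv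
  simp only [flux_balance, hdrift, hdiffusion]
  ring

section PartialDerivative

variable {d : ℕ} {f : (Fin d → ℝ) → ℝ} {x : Fin d → ℝ}

theorem hasDerivAt_comp_update (hf : DifferentiableAt ℝ f x) (i : Fin d) :
    HasDerivAt (fun s => f (Function.update x i s)) (pd f x i) (x i) := by
  have hf' : DifferentiableAt ℝ f (Function.update x i (x i)) := by
    rwa [Function.update_eq_self]
  exact (hf'.comp (x i) (hasDerivAt_update x i (x i)).differentiableAt).hasDerivAt

theorem pd_update_self (f : (Fin d → ℝ) → ℝ) (x : Fin d → ℝ) (i : Fin d) (s : ℝ) :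
    pd f (Function.update x i s) i = deriv (fun t => f (Function.update x i t)) s := by
  simp only [pd, Function.update_idem, Function.update_self]

theorem pd_sum_sq (x : Fin d → ℝ) (i : Fin d) : pd (fun y => ∑ k, y k ^ 2) x i = 2 * x i := by
  have hcoord (k : Fin d) :
      HasDerivAt (fun s => Function.update x i s k) ((Pi.single i 1 : Fin d → ℝ) k) (x i) :=
    hasDerivAt_pi.1 (hasDerivAt_update x i (x i)) k
  have hsum := HasDerivAt.fun_sum (u := Finset.univ) fun k _ => (hcoord k).fun_pow 2
  refine hsum.deriv.trans ?_
  simp [Pi.single_apply]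

theorem pd_exp_neg (hf : DifferentiableAt ℝ f x) (i : Fin d) :
    pd (fun y => Real.exp (-f y)) x i = -pd f x i * Real.exp (-f x) := by
  refine (hasDerivAt_comp_update hf i).fun_neg.exp.deriv.trans ?_
  rw [Function.update_eq_self, mul_comm]

theorem pd_drift_add_pd_diffusion_of_flux_balance {b D : (Fin d → ℝ) → ℝ} {i : Fin d} (c : ℝ)
    (hf : DifferentiableAt ℝ f x) (hb : DifferentiableAt ℝ b x)
    (flux_balance : ∀ y, D y * pd f y i = -(b y * f y)) :
    pd (fun y => (c + b y) * f y) x i + pd (fun y => D y * pd f y i) x i = c * pd f x i := by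
  have hline := deriv_drift_add_deriv_diffusion_of_flux_balance
    (D := fun s => D (Function.update x i s)) c
    (hasDerivAt_comp_update hf i).differentiableAt (hasDerivAt_comp_update hb i).differentiableAt
    fun s => by rw [← pd_update_self]; exact flux_balance _
  simp only [← pd_update_self, Function.update_eq_self] at hline
  exact hline

end PartialDerivative

section ExtendedHamiltonian

variable {d : ℕ} (U : (Fin d → ℝ) → ℝ) (g φ : ℝ → ℝ) (θ r : Fin d → ℝ) (a ra : ℝ)

theorem pd_Hext_position (i : Fin d) :
    pd (fun θ' => Hext U g φ θ' r a ra) θ i = g a * pd U θ i := by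
  simp only [pd, Hext, Hfun, deriv_add_const, deriv_const_mul_field]

theorem pd_Hext_momentum (i : Fin d) :
    pd (fun r' => Hext U g φ θ r' a ra) r i = g a * r i := by
  have hsq : deriv (fun s => ∑ k, Function.update r i s k ^ 2) (r i) = 2 * r i := pd_sum_sq r i
  simp only [pd, Hext, Hfun, deriv_add_const, deriv_const_mul_field, deriv_const_add,
    deriv_div_const, hsq]
  ring

variable {g φ a} in
theorem hasDerivAt_Hext_tempering (hg : DifferentiableAt ℝ g a) (hφ : DifferentiableAt ℝ φ a) :
    HasDerivAt (fun s => Hext U g φ θ r s ra) (-hcpl U g φ θ r a) a := by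
  have hsum := ((hg.hasDerivAt.mul_const (Hfun U θ r)).fun_add hφ.hasDerivAt).add_const (ra ^ 2 / 2)
  refine hsum.congr_deriv ?_
  rw [hcpl]
  ring

theorem hasDerivAt_Hext_temperingMomentum :
    HasDerivAt (fun s => Hext U g φ θ r a s) ra ra := by
  have hsq := ((hasDerivAt_pow 2 ra).div_const 2).const_add (g a * Hfun U θ r + φ a)
  refine hsq.congr_deriv ?_
  norm_num

end ExtendedHamiltonian

section Density

variable {d : ℕ} {U : (Fin d → ℝ) → ℝ} {g φ : ℝ → ℝ} {θ : Fin d → ℝ} {a : ℝ}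

theorem pd_pdens_position (hU : DifferentiableAt ℝ U θ) (r : Fin d → ℝ) (ra : ℝ) (i : Fin d) :
    pd (fun θ' => pdens U g φ θ' r a ra) θ i = -(g a * pd U θ i) * pdens U g φ θ r a ra := by
  have hH : DifferentiableAt ℝ (fun θ' => Hext U g φ θ' r a ra) θ := by
    unfold Hext Hfun
    fun_prop
  rw [← pd_Hext_position U g φ θ r a ra i]
  exact pd_exp_neg hH i

variable (U g φ θ a) in
theorem pd_pdens_momentum (r : Fin d → ℝ) (ra : ℝ) (i : Fin d) :
    pd (fun r' => pdens U g φ θ r' a ra) r i = -(g a * r i) * pdens U g φ θ r a ra := by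
  have hH : DifferentiableAt ℝ (fun r' => Hext U g φ θ r' a ra) r := by
    unfold Hext Hfun
    fun_prop
  rw [← pd_Hext_momentum U g φ θ r a ra i]
  exact pd_exp_neg hH i

theorem deriv_pdens_tempering (hg : DifferentiableAt ℝ g a) (hφ : DifferentiableAt ℝ φ a)
    (r : Fin d → ℝ) (ra : ℝ) :
    deriv (fun s => pdens U g φ θ r s ra) a = hcpl U g φ θ r a * pdens U g φ θ r a ra := by
  refine (hasDerivAt_Hext_tempering U θ r ra hg hφ).fun_neg.exp.deriv.trans ?_
  rw [neg_neg, mul_comm, pdens]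

variable (U g φ θ a) in
theorem hasDerivAt_pdens_temperingMomentum (r : Fin d → ℝ) (ra : ℝ) :
    HasDerivAt (fun s => pdens U g φ θ r a s) (-ra * pdens U g φ θ r a ra) ra := by
  rw [mul_comm]
  exact (hasDerivAt_Hext_temperingMomentum U g φ θ r a ra).fun_neg.exp

theorem fokkerPlanck_particle_pdens_eq_zero (hU : DifferentiableAt ℝ U θ) (hga : g a ≠ 0)
    (γ : ℝ) (r : Fin d → ℝ) (ra : ℝ) (i : Fin d) :
    -(r i * pd (fun θ' => pdens U g φ θ' r a ra) θ i)
      + pd (fun r' => (pd U θ i + γ * r' i) * pdens U g φ θ r' a ra) r i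
      + pd (fun r' => γ / g a * pd (fun r'' => pdens U g φ θ r'' a ra) r' i) r i = 0 := by
  have hdiff : DifferentiableAt ℝ (fun r' => pdens U g φ θ r' a ra) r := by
    unfold pdens Hext Hfun
    fun_prop
  have flux_balance (r' : Fin d → ℝ) :
      γ / g a * pd (fun r'' => pdens U g φ θ r'' a ra) r' i
        = -(γ * r' i * pdens U g φ θ r' a ra) := by
    rw [pd_pdens_momentum]
    field_simp
  have hmomentum := pd_drift_add_pd_diffusion_of_flux_balance (b := fun r' => γ * r' i)
    (pd U θ i) hdiff (by fun_prop) flux_balance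
  rw [add_assoc, hmomentum, pd_pdens_position hU, pd_pdens_momentum]
  ring

theorem fokkerPlanck_tempering_pdens_eq_zero (hg : DifferentiableAt ℝ g a)
    (hφ : DifferentiableAt ℝ φ a) (γα : ℝ) (r : Fin d → ℝ) (ra : ℝ) :
    -(ra * deriv (fun s => pdens U g φ θ r s ra) a)
      + deriv (fun s => (γα * s - hcpl U g φ θ r a) * pdens U g φ θ r a s) ra
      + γα * deriv (deriv fun s => pdens U g φ θ r a s) ra = 0 := by
  have hderiv (s : ℝ) := hasDerivAt_pdens_temperingMomentum U g φ θ a r s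
  have flux_balance (s : ℝ) :
      γα * deriv (fun s => pdens U g φ θ r a s) s = -(γα * s * pdens U g φ θ r a s) := by
    rw [(hderiv s).deriv]
    ring
  have hmomentum := deriv_drift_add_deriv_diffusion_of_flux_balance (b := fun s => γα * s)
    (-hcpl U g φ θ r a) (hderiv ra).differentiableAt (by fun_prop) flux_balance
  simp only [neg_add_eq_sub, deriv_const_mul_field] at hmomentum
  rw [add_assoc, hmomentum, deriv_pdens_tempering hg hφ, (hderiv ra).deriv]
  ring

theorem ctld_stochastic_approximation_stationary_density_general
    (hU : DifferentiableAt ℝ U θ) (hg : DifferentiableAt ℝ g a) (hφ : DifferentiableAt ℝ φ a)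
    (hga : g a ≠ 0) (γ γα η : ℝ) (Sig : (Fin d → ℝ) → Matrix (Fin d) (Fin d) ℝ)
    (σ2 : (Fin d → ℝ) → ℝ) (r : Fin d → ℝ) (ra : ℝ) :
    -(∑ i, r i * pd (fun θ' => pdens U g φ θ' r a ra) θ i)
      + (∑ i, pd (fun r' => (pd U θ i + γ * r' i) * pdens U g φ θ r' a ra) r i)
      + (η / 2) * (∑ i, ∑ j,
          pd (fun r' => Sig θ i j * pd (fun r'' => pdens U g φ θ r'' a ra) r' j) r i)
      - ra * deriv (fun s => pdens U g φ θ r s ra) a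
      + deriv (fun s => (γα * s - hcpl U g φ θ r a) * pdens U g φ θ r a s) ra
      + (η / 2) * deriv g a * σ2 θ * deriv (deriv (fun s => pdens U g φ θ r a s)) ra
      + (∑ i, pd (fun r' => (γ / g a) * pd (fun r'' => pdens U g φ θ r'' a ra) r' i) r i)
      - (η / 2) * (∑ i, ∑ j,
          pd (fun r' => Sig θ i j * pd (fun r'' => pdens U g φ θ r'' a ra) r' j) r i)
      + γα * deriv (deriv (fun s => pdens U g φ θ r a s)) ra
      - (η / 2) * deriv g a * σ2 θ * deriv (deriv (fun s => pdens U g φ θ r a s)) ra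
      = 0 := by
  have hparticle := Finset.sum_eq_zero fun i (_ : i ∈ Finset.univ) =>
    fokkerPlanck_particle_pdens_eq_zero (φ := φ) hU hga γ r ra i
  have htempering := fokkerPlanck_tempering_pdens_eq_zero (U := U) (θ := θ) hg hφ γα r ra
  simp only [Finset.sum_add_distrib, Finset.sum_neg_distrib] at hparticle
  linear_combination hparticle + htempering

end Density

/-- **Theorem 1.** `p = exp(−H_e)` is annihilated by the Fokker–Planck operator of the
stochastic-approximation continuously tempered Langevin dynamics, in which the diffusion
added by the minibatch gradient noise `η Σ(θ)/2` and potential noise `η g′(α) σ²(θ)/2` is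
exactly compensated by reducing the injected noise. Hence `exp(−H_e)` is the stationary
(unnormalized) density of the stochastic-approximation dynamics when the noise-variance
terms `Σ(θ)` and `σ²(θ)` are available. -/
theorem ctld_stochastic_approximation_stationary_density
    {d : ℕ} (hd : 1 ≤ d)
    (U : (Fin d → ℝ) → ℝ) (hU : ContDiff ℝ 1 U)
    (g φ : ℝ → ℝ) (hg : ContDiff ℝ 1 g) (hφ : ContDiff ℝ 1 φ)
    (hgpos : ∀ a : ℝ, 0 < g a)
    (γ γα η : ℝ) (hγ : 0 < γ) (hγα : 0 < γα) (hη : 0 < η)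
    (Sig : (Fin d → ℝ) → Matrix (Fin d) (Fin d) ℝ) (hSigc : Continuous Sig)
    (hSigsymm : ∀ θ, (Sig θ).IsSymm)
    (σ2 : (Fin d → ℝ) → ℝ) (hσ2c : Continuous σ2) :
    ∀ (θ r : Fin d → ℝ) (a ra : ℝ),
      -(∑ i, r i * pd (fun θ' => pdens U g φ θ' r a ra) θ i)
      + (∑ i, pd (fun r' => (pd U θ i + γ * r' i) * pdens U g φ θ r' a ra) r i)
      + (η / 2) * (∑ i, ∑ j,
          pd (fun r' => Sig θ i j * pd (fun r'' => pdens U g φ θ r'' a ra) r' j) r i)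
      - ra * deriv (fun s => pdens U g φ θ r s ra) a
      + deriv (fun s => (γα * s - hcpl U g φ θ r a) * pdens U g φ θ r a s) ra
      + (η / 2) * deriv g a * σ2 θ * deriv (deriv (fun s => pdens U g φ θ r a s)) ra
      + (∑ i, pd (fun r' => (γ / g a) * pd (fun r'' => pdens U g φ θ r'' a ra) r' i) r i)
      - (η / 2) * (∑ i, ∑ j,
          pd (fun r' => Sig θ i j * pd (fun r'' => pdens U g φ θ r'' a ra) r' j) r i)
      + γα * deriv (deriv (fun s => pdens U g φ θ r a s)) ra
      - (η / 2) * deriv g a * σ2 θ * deriv (deriv (fun s => pdens U g φ θ r a s)) ra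
      = 0 := by
  exact fun θ r a ra => ctld_stochastic_approximation_stationary_density_general
    (hU.differentiable one_ne_zero θ) (hg.differentiable one_ne_zero a)
    (hφ.differentiable one_ne_zero a) (hgpos a).ne' γ γα η Sig σ2 r ra
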